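/- arXiv:1009.4691 — 10 statements merged into one kernel-verified Lean document; each statement's English description precedes it below -/
import Mathlib

section
/- For every n ∈ ℕ and all complex edge weights (u,v,w), the conditional partition functions of the diamond hierarchical lattice satisfy the Migdal–Kadanoff RG equations: U_{n+1} = (U_n² + V_n²)², V_{n+1} = V_n²·(U_n + W_n)², and W_{n+1} = (V_n² + W_n²)²; equivalently, (U_n, V_n, W_n) = R̂^n(u, v, w). -/
/-- A finite (multi)graph with oriented edges and two marked vertices `a`, `b`. -/
structure MarkedGraph where
  V : Type
  E : Type
  [fintV : Fintype V]
  [decV : DecidableEq V]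
  [fintE : Fintype E]
  src : E → V
  tgt : E → V
  a : V
  b : V

attribute [instance] MarkedGraph.fintV MarkedGraph.decV MarkedGraph.fintE

/-- Sources of the four edges of the diamond graph: `a→c`, `c→b`, `a→d`, `d→b`,
where the vertices `a, b, c, d` are labelled `0, 1, 2, 3`. -/
def dSrc : Fin 4 → Fin 4 := ![0, 2, 0, 3]

/-- Targets of the four edges of the diamond graph. -/
def dTgt : Fin 4 → Fin 4 := ![2, 1, 3, 1]

/-- The gluing map sending a vertex of the `i`-th copy of `G` to a vertex of the graph
obtained by replacing each edge of the diamond by a copy of `G`: the two marked vertices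
are identified with the endpoints of the `i`-th diamond edge, interior vertices are kept. -/
def glue (G : MarkedGraph) (i : Fin 4) (x : G.V) :
    Fin 4 ⊕ (Fin 4 × {v : G.V // v ≠ G.a ∧ v ≠ G.b}) :=
  if hx : x = G.a then Sum.inl (dSrc i)
  else if hx' : x = G.b then Sum.inl (dTgt i)
  else Sum.inr (i, ⟨x, hx, hx'⟩)

/-- Replace each of the four edges of the diamond graph by a copy of `G`, gluing the
marked vertices of the copies to the diamond vertices; the marked vertices of the result
are the diamond vertices `a = 0` and `b = 1`. -/
def diamondStep (G : MarkedGraph) : MarkedGraph where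
  V := Fin 4 ⊕ (Fin 4 × {v : G.V // v ≠ G.a ∧ v ≠ G.b})
  E := Fin 4 × G.E
  src := fun e => glue G e.1 (G.src e.2)
  tgt := fun e => glue G e.1 (G.tgt e.2)
  a := Sum.inl 0
  b := Sum.inl 1

/-- The diamond hierarchical lattice: `Γ₀` is a single edge joining the marked vertices,
and `Γ_{n+1}` is obtained from the diamond by replacing each edge with `Γ_n`. -/
def DHLGraph : ℕ → MarkedGraph
  | 0 => { V := Bool, E := Unit, src := fun _ => false, tgt := fun _ => true,
           a := false, b := true }
  | n + 1 => diamondStep (DHLGraph n)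

/-- Edge weights: `ω(+1,+1) = u`, `ω(+1,−1) = ω(−1,+1) = v`, `ω(−1,−1) = w`,
where the spin `+1` is encoded by `true` and `−1` by `false`. -/
def spinWeight (u v w : ℂ) : Bool → Bool → ℂ
  | true, true => u
  | true, false => v
  | false, true => v
  | false, false => w

/-- The conditional partition function `Z^{ε,ε'}`: the sum over all spin configurations
`σ : V → {±1}` with `σ(a) = ε` and `σ(b) = ε'` of the product over all edges of the
corresponding weights. -/
noncomputable def condZ (G : MarkedGraph) (u v w : ℂ) (ε ε' : Bool) : ℂ :=
  ∑ σ ∈ Finset.univ.filter (fun σ : G.V → Bool => σ G.a = ε ∧ σ G.b = ε'),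
    ∏ e : G.E, spinWeight u v w (σ (G.src e)) (σ (G.tgt e))

/-- The Migdal–Kadanoff renormalization map `R̂(U,V,W) = ((U²+V²)², V²(U+W)², (V²+W²)²)`. -/
def MKmap (p : ℂ × ℂ × ℂ) : ℂ × ℂ × ℂ :=
  ((p.1 ^ 2 + p.2.1 ^ 2) ^ 2, p.2.1 ^ 2 * (p.1 + p.2.2) ^ 2, (p.2.1 ^ 2 + p.2.2 ^ 2) ^ 2)

/-- Extend an interior configuration by the boundary spins. -/
def extSpin (G : MarkedGraph) (ε ε' : Bool) (τ : {v : G.V // v ≠ G.a ∧ v ≠ G.b} → Bool)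
    (x : G.V) : Bool :=
  if hx : x = G.a then ε else if hx' : x = G.b then ε' else τ ⟨x, hx, hx'⟩

lemma condZ_eq_ext (G : MarkedGraph) (hab : G.a ≠ G.b) (u v w : ℂ) (ε ε' : Bool) :
    condZ G u v w ε ε' = ∑ τ : {v : G.V // v ≠ G.a ∧ v ≠ G.b} → Bool,
      ∏ e : G.E, spinWeight u v w (extSpin G ε ε' τ (G.src e)) (extSpin G ε ε' τ (G.tgt e)) := by
  unfold condZ
  symm
  refine Finset.sum_bij' (fun τ _ => extSpin G ε ε' τ) (fun σ _ x => σ x.1) ?_ ?_ ?_ ?_ ?_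
  · intro τ _
    simp [extSpin, hab.symm]
  · intro σ _
    simp
  · intro τ _
    funext x
    simp [extSpin, x.2.1, x.2.2]
  · intro σ hσ
    simp only [Finset.mem_filter, Finset.mem_univ, true_and] at hσ
    funext x
    simp only [extSpin]
    split_ifs with h1 h2
    · rw [h1, hσ.1]
    · rw [h2, hσ.2]
    · rfl
  · intro τ _
    rfl

lemma comp_glue (G : MarkedGraph) (s : Fin 4 → Bool)
    (τ : Fin 4 → {v : G.V // v ≠ G.a ∧ v ≠ G.b} → Bool) (i : Fin 4) (x : G.V) :
    (Sum.elim s (fun p : Fin 4 × {v : G.V // v ≠ G.a ∧ v ≠ G.b} => τ p.1 p.2)) (glue G i x) =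
      extSpin G (s (dSrc i)) (s (dTgt i)) (τ i) x := by
  unfold glue extSpin
  split_ifs <;> rfl

lemma condZ_step_sum (G : MarkedGraph) (hab : G.a ≠ G.b) (u v w : ℂ) (ε ε' : Bool) :
    condZ (diamondStep G) u v w ε ε' =
      ∑ s ∈ Finset.univ.filter (fun s : Fin 4 → Bool => s 0 = ε ∧ s 1 = ε'),
        ∏ i : Fin 4, condZ G u v w (s (dSrc i)) (s (dTgt i)) := by
  simp only [condZ_eq_ext G hab, Finset.prod_univ_sum, Fintype.piFinset_univ]
  rw [← Finset.sum_product']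
  unfold condZ
  symm
  refine Finset.sum_bij'
    (fun p _ => Sum.elim p.1 (fun q : Fin 4 × {v : G.V // v ≠ G.a ∧ v ≠ G.b} => p.2 q.1 q.2))
    (fun σ _ => (fun i => σ (Sum.inl i), fun i x => σ (Sum.inr (i, x)))) ?_ ?_ ?_ ?_ ?_
  · intro p hp
    have hp' : p.1 0 = ε ∧ p.1 1 = ε' := by simpa using hp
    exact Finset.mem_filter.mpr ⟨Finset.mem_univ _, hp'⟩
  · intro σ hσ
    have hσ' : σ (Sum.inl 0) = ε ∧ σ (Sum.inl 1) = ε' := (Finset.mem_filter.mp hσ).2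
    simpa using hσ'
  · intro p _
    rfl
  · intro σ _
    funext x
    rcases x with x | x <;> rfl
  · intro p _
    refine (Fintype.prod_prod_type' (fun (i : Fin 4) (e : G.E) => spinWeight u v w
        (extSpin G (p.1 (dSrc i)) (p.1 (dTgt i)) (p.2 i) (G.src e))
        (extSpin G (p.1 (dSrc i)) (p.1 (dTgt i)) (p.2 i) (G.tgt e)))).symm.trans ?_
    refine Finset.prod_congr rfl ?_
    intro e _
    rw [← comp_glue, ← comp_glue]
    rfl

lemma filter_spins (ε ε' : Bool) :
    Finset.univ.filter (fun s : Fin 4 → Bool => s 0 = ε ∧ s 1 = ε') =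
      {![ε, ε', true, true], ![ε, ε', true, false], ![ε, ε', false, true],
        ![ε, ε', false, false]} := by
  revert ε ε'
  decide

lemma condZ_step (G : MarkedGraph) (hab : G.a ≠ G.b) (u v w : ℂ) (ε ε' : Bool) :
    condZ (diamondStep G) u v w ε ε' =
      (condZ G u v w ε true * condZ G u v w true ε' +
        condZ G u v w ε false * condZ G u v w false ε') ^ 2 := by
  rw [condZ_step_sum G hab, filter_spins, Finset.sum_insert, Finset.sum_insert,
    Finset.sum_insert, Finset.sum_singleton]
  · simp [Fin.prod_univ_four, dSrc, dTgt]
    ring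
  all_goals revert ε ε'; decide

lemma DHL_ab (n : ℕ) : (DHLGraph n).a ≠ (DHLGraph n).b := by
  cases n with
  | zero => exact Bool.false_ne_true
  | succ n =>
    intro h
    have h' : (0 : Fin 4) = 1 := Sum.inl.inj h
    exact absurd h' (by decide)

lemma condZ_zero (u v w : ℂ) (ε ε' : Bool) :
    condZ (DHLGraph 0) u v w ε ε' = spinWeight u v w ε ε' := by
  have h : Finset.univ.filter (fun σ : Bool → Bool => σ false = ε ∧ σ true = ε') =
      {fun b => cond b ε' ε} := by
    revert ε ε'
    decide
  change ∑ σ ∈ Finset.univ.filter (fun σ : Bool → Bool => σ false = ε ∧ σ true = ε'),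
    ∏ e : Unit, spinWeight u v w (σ false) (σ true) = _
  rw [h]
  simp

lemma condZ_succ (n : ℕ) (u v w : ℂ) (ε ε' : Bool) :
    condZ (DHLGraph (n + 1)) u v w ε ε' =
      (condZ (DHLGraph n) u v w ε true * condZ (DHLGraph n) u v w true ε' +
        condZ (DHLGraph n) u v w ε false * condZ (DHLGraph n) u v w false ε') ^ 2 :=
  condZ_step _ (DHL_ab n) u v w ε ε'

lemma condZ_symm (n : ℕ) (u v w : ℂ) :
    condZ (DHLGraph n) u v w false true = condZ (DHLGraph n) u v w true false := by
  induction n with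
  | zero => simp [condZ_zero, spinWeight]
  | succ n ih =>
    rw [condZ_succ, condZ_succ, ih]
    ring

lemma condZ_RG (n : ℕ) (u v w : ℂ) :
    condZ (DHLGraph (n + 1)) u v w true true =
        ((condZ (DHLGraph n) u v w true true) ^ 2 +
          (condZ (DHLGraph n) u v w true false) ^ 2) ^ 2 ∧
      condZ (DHLGraph (n + 1)) u v w true false =
        (condZ (DHLGraph n) u v w true false) ^ 2 *
          (condZ (DHLGraph n) u v w true true + condZ (DHLGraph n) u v w false false) ^ 2 ∧
      condZ (DHLGraph (n + 1)) u v w false false =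
        ((condZ (DHLGraph n) u v w true false) ^ 2 +
          (condZ (DHLGraph n) u v w false false) ^ 2) ^ 2 := by
  refine ⟨?_, ?_, ?_⟩ <;> rw [condZ_succ] <;> try rw [condZ_symm]
  all_goals ring

/-- **Migdal–Kadanoff RG equations.**  The conditional partition functions
`U_n = Z_n^{+,+}`, `V_n = Z_n^{+,−}`, `W_n = Z_n^{−,−}` of the diamond hierarchical
lattice satisfy `U_{n+1} = (U_n² + V_n²)²`, `V_{n+1} = V_n²(U_n + W_n)²`,
`W_{n+1} = (V_n² + W_n²)²`; equivalently `(U_n, V_n, W_n) = R̂^n (u, v, w)`. -/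
theorem migdal_kadanoff_RG (n : ℕ) (u v w : ℂ) :
    (condZ (DHLGraph (n + 1)) u v w true true =
        ((condZ (DHLGraph n) u v w true true) ^ 2 +
          (condZ (DHLGraph n) u v w true false) ^ 2) ^ 2 ∧
      condZ (DHLGraph (n + 1)) u v w true false =
        (condZ (DHLGraph n) u v w true false) ^ 2 *
          (condZ (DHLGraph n) u v w true true + condZ (DHLGraph n) u v w false false) ^ 2 ∧
      condZ (DHLGraph (n + 1)) u v w false false =
        ((condZ (DHLGraph n) u v w true false) ^ 2 +
          (condZ (DHLGraph n) u v w false false) ^ 2) ^ 2) ∧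
    (condZ (DHLGraph n) u v w true true, condZ (DHLGraph n) u v w true false,
      condZ (DHLGraph n) u v w false false) = MKmap^[n] (u, v, w) := by
  refine ⟨condZ_RG n u v w, ?_⟩
  induction n with
  | zero => simp [condZ_zero, spinWeight]
  | succ n ih =>
    obtain ⟨h1, h2, h3⟩ := condZ_RG n u v w
    rw [Function.iterate_succ_apply', ← ih, h1, h2, h3]
    rfl
end

section
/- The Migdal–Kadanoff renormalization is algebraically stable: for every integer n ≥ 1, the three components of the n-fold composition R̂^n : ℂ³ → ℂ³ are homogeneous polynomials of degree 4^n that have no nonconstant common polynomial factor. Equivalently, the algebraic degree satisfies deg(R^n) = 4^n = (deg R)^n for all n. -/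
open MvPolynomial

/-- The components of the Migdal–Kadanoff renormalization
`R̂(U,V,W) = ((U²+V²)², V²(U+W)², (V²+W²)²)` as multivariate polynomials in the
variables `U = X 0`, `V = X 1`, `W = X 2`. -/
noncomputable def MKcomp : Fin 3 → MvPolynomial (Fin 3) ℂ :=
  ![(X 0 ^ 2 + X 1 ^ 2) ^ 2, X 1 ^ 2 * (X 0 + X 2) ^ 2, (X 1 ^ 2 + X 2 ^ 2) ^ 2]

/-- The components of the `n`-fold iterate `R̂^n`, obtained by repeated substitution. -/
noncomputable def MKiter : ℕ → Fin 3 → MvPolynomial (Fin 3) ℂ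
  | 0 => fun i => X i
  | n + 1 => fun i => bind₁ (MKiter n) (MKcomp i)


lemma MKiter_zero (n : ℕ) :
    MKiter (n+1) 0 = (MKiter n 0 ^ 2 + MKiter n 1 ^ 2) ^ 2 := by
  simp [MKiter, MKcomp]

lemma MKiter_one (n : ℕ) :
    MKiter (n+1) 1 = (MKiter n 1 * (MKiter n 0 + MKiter n 2)) ^ 2 := by
  simp [MKiter, MKcomp, mul_pow]

lemma MKiter_two (n : ℕ) :
    MKiter (n+1) 2 = (MKiter n 1 ^ 2 + MKiter n 2 ^ 2) ^ 2 := by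
  simp [MKiter, MKcomp]

lemma MKiter_eval (n : ℕ) : ∃ x : ℂ, x ≠ 0 ∧ ∀ i, eval (fun _ => (1:ℂ)) (MKiter n i) = x := by
  induction n with
  | zero => exact ⟨1, one_ne_zero, fun i => by simp [MKiter]⟩
  | succ n ih =>
    obtain ⟨x, hx, h⟩ := ih
    refine ⟨4 * x ^ 4, by simpa using hx, fun i => ?_⟩
    fin_cases i
    · simp only [Fin.zero_eta, MKiter_zero, map_pow, map_add, h]; ring
    · simp only [Fin.mk_one, MKiter_one, map_pow, map_add, map_mul, h]; ring
    · simp only [Fin.reduceFinMk, MKiter_two, map_pow, map_add, h]; ring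

lemma MKiter_hom (n : ℕ) : ∀ i, (MKiter n i).IsHomogeneous (4 ^ n) := by
  induction n with
  | zero => intro i; simpa [MKiter] using isHomogeneous_X ℂ i
  | succ n ih =>
    have e : 4 ^ (n+1) = (4 ^ n * 2) * 2 := by ring
    intro i
    rw [e]
    fin_cases i
    · simp only [Fin.zero_eta, MKiter_zero]
      exact (((ih 0).pow 2).add ((ih 1).pow 2)).pow 2
    · simp only [Fin.mk_one, MKiter_one, mul_two (4 ^ n)]
      exact ((ih 1).mul ((ih 0).add (ih 2))).pow 2
    · simp only [Fin.reduceFinMk, MKiter_two]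
      exact (((ih 1).pow 2).add ((ih 2).pow 2)).pow 2

lemma MK_lin {p : MvPolynomial (Fin 3) ℂ} (hp : Prime p) (a c : ℂ)
    (h0 : p ∣ X 0 - C a * X 1) (h2 : p ∣ X 2 - C c * X 1) : False := by
  have hirr : Irreducible (X 0 - C a * X 1 : MvPolynomial (Fin 3) ℂ) := by
    have hc : coeff (Finsupp.single 0 1) (X 0 - C a * X 1 : MvPolynomial (Fin 3) ℂ) = 1 := by
      simp [coeff_X, coeff_C_mul, Finsupp.single_left_inj]
    have hd : (X 0 - C a * X 1 : MvPolynomial (Fin 3) ℂ).IsHomogeneous 1 :=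
      (isHomogeneous_X ℂ 0).sub (by simpa using (isHomogeneous_C (Fin 3) a).mul (isHomogeneous_X ℂ 1))
    have hne : (X 0 - C a * X 1 : MvPolynomial (Fin 3) ℂ) ≠ 0 := by
      intro h; rw [h] at hc; simp at hc
    refine irreducible_of_totalDegree_eq_one (hd.totalDegree hne) ?_
    intro x hx
    have := hx (Finsupp.single 0 1)
    rw [hc] at this
    exact isUnit_of_dvd_one this
  have hass := (hp.irreducible.associated_of_dvd hirr h0)
  obtain ⟨q, hq⟩ := hass.symm.dvd.trans h2
  have := congrArg (eval ![a, 1, c + 1]) hq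
  simp at this

lemma MK_contr {p : MvPolynomial (Fin 3) ℂ} (hp : Prime p) (n : ℕ) : ∀ a c : ℂ,
    p ∣ MKiter n 0 - C a * MKiter n 1 → p ∣ MKiter n 2 - C c * MKiter n 1 →
    p ∣ MKiter n 1 := by
  have key : ∀ (f g : MvPolynomial (Fin 3) ℂ) (a : ℂ), p ∣ f ^ 2 - C a * g ^ 2 →
      ∃ b : ℂ, p ∣ f - C b * g := by
    intro f g a h
    obtain ⟨b, rfl⟩ := IsAlgClosed.exists_pow_nat_eq a (n := 2) (by norm_num)
    have e : f ^ 2 - C (b ^ 2) * g ^ 2 = (f - C b * g) * (f - C (-b) * g) := by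
      simp only [map_pow, map_neg]; ring
    rw [e] at h
    rcases hp.dvd_or_dvd h with h | h
    exacts [⟨_, h⟩, ⟨_, h⟩]
  induction n with
  | zero =>
    intro a c h0 h2
    exact (MK_lin hp a c (by simpa [MKiter] using h0) (by simpa [MKiter] using h2)).elim
  | succ n ih =>
    intro a c h0 h2
    rw [MKiter_zero, MKiter_one] at h0
    rw [MKiter_two, MKiter_one] at h2
    rw [MKiter_one]
    obtain ⟨a, h0⟩ := key _ _ _ h0
    obtain ⟨c, h2⟩ := key _ _ _ h2
    generalize MKiter n 0 = U at *
    generalize MKiter n 1 = V at *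
    generalize MKiter n 2 = W at *
    apply dvd_pow _ two_ne_zero
    by_cases hs : p ∣ U + W
    · exact hs.mul_left V
    apply Dvd.dvd.mul_right
    have h3 : p ∣ (U + W) * (U - W - C (a - c) * V) := by
      have := dvd_sub h0 h2
      convert this using 1
      simp only [map_sub]; ring
    have h4 := (hp.dvd_or_dvd h3).resolve_left hs
    have h5 : p ∣ (U - C a * V) ^ 2 - C (a ^ 2 - 1 - a * (a - c)) * V ^ 2 := by
      have := dvd_sub h0 (h4.mul_left (C a * V))
      convert this using 1
      simp only [map_sub, map_pow, map_mul, map_one]; ring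
    obtain ⟨b, h6⟩ := key _ _ _ h5
    refine ih (a + b) (a + b - (a - c)) ?_ ?_
    · convert h6 using 1
      simp only [map_add]; ring
    · have := dvd_sub h6 h4
      convert this using 1
      simp only [map_add, map_sub]; ring

lemma MK_coprime {p : MvPolynomial (Fin 3) ℂ} (hp : Prime p) (n : ℕ) :
    p ∣ MKiter n 0 → p ∣ MKiter n 1 → p ∣ MKiter n 2 → False := by
  induction n with
  | zero =>
    intro h0 h1 h2
    exact MK_lin hp 0 0 (by simpa [MKiter] using h0) (by simpa [MKiter] using h2)
  | succ n ih =>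
    intro h0 h1 h2
    rw [MKiter_zero] at h0
    rw [MKiter_one] at h1
    rw [MKiter_two] at h2
    replace h0 := hp.dvd_of_dvd_pow h0
    replace h1 := hp.dvd_of_dvd_pow h1
    replace h2 := hp.dvd_of_dvd_pow h2
    have hc := MK_contr hp n
    have hV : p ∣ MKiter n 1 := by
      rcases hp.dvd_or_dvd h1 with h | h
      · exact h
      have e : MKiter n 0 ^ 2 + MKiter n 1 ^ 2 =
          (MKiter n 0 - C Complex.I * MKiter n 1) * (MKiter n 0 - C (-Complex.I) * MKiter n 1) := by
        have : (C Complex.I : MvPolynomial (Fin 3) ℂ) ^ 2 = -1 := by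
          rw [← map_pow, Complex.I_sq]; simp
        simp only [map_neg]
        linear_combination (MKiter n 1 ^ 2) * this
      have fin : ∀ b : ℂ, p ∣ MKiter n 0 - C b * MKiter n 1 → p ∣ MKiter n 1 := by
        intro b hb
        refine hc b (-b) hb ?_
        have := dvd_sub h hb
        convert this using 1
        simp only [map_neg]; ring
      rw [e] at h0
      rcases hp.dvd_or_dvd h0 with h | h
      exacts [fin _ h, fin _ h]
    have hV2 := dvd_pow hV two_ne_zero
    exact ih (hp.dvd_of_dvd_pow ((dvd_add_left hV2).1 h0)) hV
      (hp.dvd_of_dvd_pow ((dvd_add_right hV2).1 h2))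

/-- **Algebraic stability of the Migdal–Kadanoff renormalization.**  For every `n ≥ 1`
the three components of `R̂^n` are nonzero homogeneous polynomials of degree `4^n` with
no nonconstant common factor; equivalently `deg (R^n) = 4^n = (deg R)^n`. -/
theorem MK_algebraically_stable (n : ℕ) (hn : 1 ≤ n) :
    (∀ i, MKiter n i ≠ 0) ∧
    (∀ i, (MKiter n i).IsHomogeneous (4 ^ n)) ∧
    ∀ d : MvPolynomial (Fin 3) ℂ, (∀ i, d ∣ MKiter n i) → IsUnit d := by
  have hne : ∀ i, MKiter n i ≠ 0 := by
    intro i h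
    obtain ⟨x, hx, hh⟩ := MKiter_eval n
    have := hh i
    rw [h, map_zero] at this
    exact hx this.symm
  refine ⟨hne, MKiter_hom n, fun d hd => ?_⟩
  by_contra hu
  have hd0 : d ≠ 0 := by
    rintro rfl
    exact hne 0 (zero_dvd_iff.1 (hd 0))
  obtain ⟨p, hp, hpd⟩ := WfDvdMonoid.exists_irreducible_factor hu hd0
  exact MK_coprime hp.prime n (hpd.trans (hd 0)) (hpd.trans (hd 1)) (hpd.trans (hd 2))
end

section
/- The polynomial (Z² + T²)⁴ divides each of the three components of the composition R̂_phys ∘ R̂_phys, and the three quotient polynomials, which are homogeneous of degree 28, have no nonconstant common polynomial factor. Consequently the algebraic degree of the second iterate satisfies deg(R_phys²) = 28 < 36 = (deg R_phys)², so the map R_phys is not algebraically stable. -/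
open MvPolynomial

/-- The components of the homogeneous renormalization in physical coordinates,
`R̂_phys(Z,T,Y) = (Z²(Z²+T²)², T²(Z²+Y²)², (Z²+T²)(T²Z²+Y⁴))`, as multivariate
polynomials in `Z = X 0`, `T = X 1`, `Y = X 2`. -/
noncomputable def RphysComp : Fin 3 → MvPolynomial (Fin 3) ℂ :=
  ![X 0 ^ 2 * (X 0 ^ 2 + X 1 ^ 2) ^ 2,
    X 1 ^ 2 * (X 0 ^ 2 + X 2 ^ 2) ^ 2,
    (X 0 ^ 2 + X 1 ^ 2) * (X 1 ^ 2 * X 0 ^ 2 + X 2 ^ 4)]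

/-- The components of the second iterate `R̂_phys ∘ R̂_phys`. -/
noncomputable def RphysSq : Fin 3 → MvPolynomial (Fin 3) ℂ :=
  fun i => bind₁ RphysComp (RphysComp i)

/-- The top homogeneous component of a product. -/
theorem top_component_mul (d e : MvPolynomial (Fin 3) ℂ) :
    homogeneousComponent (d.totalDegree + e.totalDegree) (d * e) =
      homogeneousComponent d.totalDegree d * homogeneousComponent e.totalDegree e := by
  have hde : d * e = (∑ i ∈ Finset.range (d.totalDegree + 1), homogeneousComponent i d) *
      ∑ i ∈ Finset.range (e.totalDegree + 1), homogeneousComponent i e := by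
    rw [sum_homogeneousComponent, sum_homogeneousComponent]
  rw [hde, Finset.sum_mul_sum, map_sum]
  simp only [map_sum]
  rw [Finset.sum_eq_single d.totalDegree, Finset.sum_eq_single e.totalDegree]
  · rw [homogeneousComponent_of_mem
      ((homogeneousComponent_isHomogeneous _ d).mul (homogeneousComponent_isHomogeneous _ e)),
      if_pos rfl]
  · intro j hj hne
    rw [homogeneousComponent_of_mem
      ((homogeneousComponent_isHomogeneous _ d).mul (homogeneousComponent_isHomogeneous _ e)),
      if_neg (by omega)]
  · intro h; simp at h
  · intro i hi hne
    apply Finset.sum_eq_zero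
    intro j hj
    rw [Finset.mem_range] at hi hj
    rw [homogeneousComponent_of_mem
      ((homogeneousComponent_isHomogeneous _ d).mul (homogeneousComponent_isHomogeneous _ e)),
      if_neg (by omega)]
  · intro h; simp at h

/-- The top component of a divisor of a nonzero homogeneous polynomial is a divisor. -/
theorem top_dvd {d q : MvPolynomial (Fin 3) ℂ} {n : ℕ} (hq : q.IsHomogeneous n) (h0 : q ≠ 0)
    (h : d ∣ q) : homogeneousComponent d.totalDegree d ∣ q := by
  obtain ⟨e, rfl⟩ := h
  have hd : d ≠ 0 := left_ne_zero_of_mul h0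
  have he : e ≠ 0 := right_ne_zero_of_mul h0
  refine ⟨homogeneousComponent e.totalDegree e, ?_⟩
  rw [← top_component_mul, ← totalDegree_mul_of_isDomain hd he,
    homogeneousComponent_of_mem hq, if_pos (hq.totalDegree h0)]

/-- The reduced components of the second iterate. -/
noncomputable def Qred : Fin 3 → MvPolynomial (Fin 3) ℂ :=
  ![X 0 ^ 4 * (X 0 ^ 4 * (X 0 ^ 2 + X 1 ^ 2) ^ 4 + X 1 ^ 4 * (X 0 ^ 2 + X 2 ^ 2) ^ 4) ^ 2,
    X 1 ^ 4 * (X 0 ^ 2 + X 2 ^ 2) ^ 4 *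
      (X 0 ^ 4 * (X 0 ^ 2 + X 1 ^ 2) ^ 2 + (X 1 ^ 2 * X 0 ^ 2 + X 2 ^ 4) ^ 2) ^ 2,
    (X 0 ^ 4 * (X 0 ^ 2 + X 1 ^ 2) ^ 4 + X 1 ^ 4 * (X 0 ^ 2 + X 2 ^ 2) ^ 4) *
      (X 0 ^ 4 * X 1 ^ 4 * (X 0 ^ 2 + X 2 ^ 2) ^ 4 + (X 1 ^ 2 * X 0 ^ 2 + X 2 ^ 4) ^ 4)]

theorem RphysSq_eq (i : Fin 3) :
    RphysSq i = ((X 0 : MvPolynomial (Fin 3) ℂ) ^ 2 + X 1 ^ 2) ^ 4 * Qred i := by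
  fin_cases i
  · simp [RphysSq, RphysComp, Qred]; ring
  · simp [RphysSq, RphysComp, Qred]; ring
  · simp [RphysSq, RphysComp, Qred]; ring

theorem Qred_hom (i : Fin 3) : (Qred i).IsHomogeneous 28 := by
  have x (j : Fin 3) (k : ℕ) : (X j ^ k : MvPolynomial (Fin 3) ℂ).IsHomogeneous k :=
    isHomogeneous_X_pow j k
  have a (j k : Fin 3) : (X j ^ 2 + X k ^ 2 : MvPolynomial (Fin 3) ℂ).IsHomogeneous 2 :=
    (x j 2).add (x k 2)
  have c : (X 1 ^ 2 * X 0 ^ 2 + X 2 ^ 4 : MvPolynomial (Fin 3) ℂ).IsHomogeneous 4 :=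
    ((x 1 2).mul (x 0 2)).add (x 2 4)
  have D := ((x 0 4).mul ((a 0 1).pow 4)).add ((x 1 4).mul ((a 0 2).pow 4))
  fin_cases i
  · exact (x 0 4).mul (D.pow 2)
  · exact ((x 1 4).mul ((a 0 2).pow 4)).mul
      ((((x 0 4).mul ((a 0 1).pow 2)).add (c.pow 2)).pow 2)
  · exact D.mul ((((x 0 4).mul (x 1 4)).mul ((a 0 2).pow 4)).add (c.pow 4))

theorem Qred_ne (i : Fin 3) : Qred i ≠ 0 := by
  intro h
  have h1 := congrArg (eval (fun _ => (1 : ℂ))) h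
  fin_cases i <;> norm_num [Qred] at h1

/-- No common zero on the line `T = 2Y` with `Y = 1`. -/
theorem no_common_zero (z : ℂ) (h : ∀ i, eval ![z, 2, 1] (Qred i) = 0) : False := by
  have h0 := h 0
  have h1 := h 1
  simp [Qred] at h0 h1
  obtain ⟨w, hw⟩ : ∃ w, w = z ^ 2 := ⟨_, rfl⟩
  have hz4 : z ^ 4 = w ^ 2 := by rw [hw]; ring
  rw [hz4, ← hw] at h0 h1
  have w0 : w ≠ 0 := by
    rintro rfl
    norm_num at h1
  have hD : w ^ 2 * (w + 2 ^ 2) ^ 4 + 2 ^ 4 * (w + 1) ^ 4 = 0 := by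
    rcases h0 with h0 | h0
    · exact absurd (by rw [hw, h0]; norm_num) w0
    · exact h0
  rcases h1 with h1 | h1
  · have : w = -1 := by linear_combination h1
    rw [this] at hD
    norm_num at hD
  · have hp : (4 * (w + 1) ^ 2 - (w + 4) * (4 * w + 1)) *
        (4 * (w + 1) ^ 2 + (w + 4) * (4 * w + 1)) = 0 := by
      linear_combination hD - (w + 4) ^ 2 * h1
    rcases mul_eq_zero.mp hp with hp | hp
    · exact w0 (by linear_combination (-1 / 9) * hp)
    · have : w ^ 2 = 0 := by
        linear_combination (64 / 945) * (h1 - (w ^ 2 + 39 / 8 * w + 1) / 8 * hp)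
      exact w0 (by simpa using this)

theorem hom_eval {p : MvPolynomial (Fin 3) ℂ} {n : ℕ} (hp : p.IsHomogeneous n) (t : ℂ)
    (v : Fin 3 → ℂ) : eval (fun i => t * v i) p = t ^ n * eval v p := by
  rw [eval_eq', eval_eq', Finset.mul_sum]
  refine Finset.sum_congr rfl fun s hs => ?_
  have hn := hp (mem_support_iff.mp hs)
  have : ∑ i, s i = n := by
    rw [← hn]
    simp [Finsupp.weight_apply, Finsupp.sum_fintype]
  simp only [mul_pow, Finset.prod_mul_distrib, Finset.prod_pow_eq_pow_sum, this]
  ring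

theorem hom_dvd {p : MvPolynomial (Fin 3) ℂ} {n : ℕ} (hp : p.IsHomogeneous n)
    (h : ∀ i, p ∣ Qred i) : n = 0 := by
  by_contra hn
  have root (v : Fin 3 → ℂ) (hv : eval v p = 0) (i : Fin 3) : eval v (Qred i) = 0 := by
    obtain ⟨e, he⟩ := h i
    rw [he, map_mul, hv, zero_mul]
  let r : Polynomial ℂ := aeval ![Polynomial.X, Polynomial.C 2, 1] p
  have hr (z : ℂ) : r.eval z = eval ![z, 2, 1] p := by
    have := congrArg (fun f => f p) (MvPolynomial.algHom_ext
      (f := (Polynomial.aeval z).comp (aeval ![Polynomial.X, Polynomial.C (2 : ℂ), 1]))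
      (g := aeval ![z, 2, 1]) (fun i => by fin_cases i <;> simp))
    simpa [r, Polynomial.coe_aeval_eq_eval, MvPolynomial.coe_aeval_eq_eval] using this
  have hdeg : r.degree = 0 := by
    by_contra hd
    obtain ⟨z, hz⟩ := IsAlgClosed.exists_root r hd
    rw [Polynomial.IsRoot.def, hr] at hz
    exact no_common_zero z (root _ hz)
  have hconst (z : ℂ) : eval ![z, 2, 1] p = r.coeff 0 := by
    rw [← hr, Polynomial.eq_C_of_degree_eq_zero hdeg]; simp
  let s : Polynomial ℂ := aeval ![1, Polynomial.C 2 * Polynomial.X, Polynomial.X] p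
  have hs (z : ℂ) : s.eval z = eval ![1, 2 * z, z] p := by
    have := congrArg (fun f => f p) (MvPolynomial.algHom_ext
      (f := (Polynomial.aeval z).comp
        (aeval ![1, Polynomial.C (2 : ℂ) * Polynomial.X, Polynomial.X]))
      (g := aeval ![1, 2 * z, z]) (fun i => by fin_cases i <;> simp))
    simpa [s, Polynomial.coe_aeval_eq_eval, MvPolynomial.coe_aeval_eq_eval] using this
  have heq : s = Polynomial.C (r.coeff 0) * Polynomial.X ^ n := by
    apply Polynomial.eq_of_infinite_eval_eq
    apply (Set.Finite.infinite_compl (Set.finite_singleton (0 : ℂ))).mono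
    intro z hz
    have hz : z ≠ 0 := hz
    have e := hom_eval hp z ![z⁻¹, 2, 1]
    rw [hconst] at e
    have hv : (fun i => z * (![z⁻¹, 2, 1] : Fin 3 → ℂ) i) = ![1, 2 * z, z] := by
      funext i
      fin_cases i <;> simp [hz, mul_comm]
    rw [hv] at e
    change s.eval z = _
    rw [hs, e, Polynomial.eval_mul, Polynomial.eval_pow, Polynomial.eval_C, Polynomial.eval_X, mul_comm]
  have h0 : eval ![1, 2 * 0, 0] p = 0 := by
    rw [← hs, heq]; simp [hn]
  have := root _ h0 0
  simp [Qred] at this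

theorem Qred_coprime (d : MvPolynomial (Fin 3) ℂ) (h : ∀ i, d ∣ Qred i) : IsUnit d := by
  have h0 : d.totalDegree = 0 :=
    hom_dvd (homogeneousComponent_isHomogeneous _ d)
      (fun i => top_dvd (Qred_hom i) (Qred_ne i) (h i))
  have hd : d ≠ 0 := by
    rintro rfl
    exact Qred_ne 0 (zero_dvd_iff.mp (h 0))
  rw [totalDegree_eq_zero_iff_eq_C] at h0
  rw [h0] at hd ⊢
  refine IsUnit.map C (isUnit_iff_ne_zero.mpr ?_)
  intro h; rw [h] at hd; simp at hd

/-- **`R_phys` is not algebraically stable.**  The polynomial `(Z²+T²)⁴` divides each of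
the three components of `R̂_phys ∘ R̂_phys`, and the quotient polynomials are homogeneous
of degree `28` with no nonconstant common factor.  Hence `deg (R_phys²) = 28 < 36 =
(deg R_phys)²`. -/
theorem Rphys_not_algebraically_stable :
    (∀ i, ((X 0 : MvPolynomial (Fin 3) ℂ) ^ 2 + X 1 ^ 2) ^ 4 ∣ RphysSq i) ∧
    ∀ q : Fin 3 → MvPolynomial (Fin 3) ℂ,
      (∀ i, RphysSq i = ((X 0 : MvPolynomial (Fin 3) ℂ) ^ 2 + X 1 ^ 2) ^ 4 * q i) →
      (∀ i, (q i).IsHomogeneous 28) ∧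
      ∀ d : MvPolynomial (Fin 3) ℂ, (∀ i, d ∣ q i) → IsUnit d := by
  refine ⟨fun i => ⟨_, RphysSq_eq i⟩, fun q hq => ?_⟩
  have hA : ((X 0 : MvPolynomial (Fin 3) ℂ) ^ 2 + X 1 ^ 2) ^ 4 ≠ 0 := by
    intro h
    have h1 := congrArg (eval (fun _ => (1 : ℂ))) h
    norm_num at h1
  have : q = Qred := by
    funext i
    exact mul_left_cancel₀ hA ((hq i).symm.trans (RphysSq_eq i))
  subst this
  exact ⟨Qred_hom, Qred_coprime⟩
end

section
/- For every D > 0 there exists λ ∈ (0,1) with the following property: whenever I and J are bounded nonempty open intervals of ℝ, φ is a real Möbius transformation that is defined at every point of I and maps I into J, and the hyperbolic diameter of φ(I) in J is at most D (i.e., dist_J(φ(x), φ(y)) ≤ D for all x, y ∈ I), then dist_J(φ(x), φ(y)) ≤ λ · dist_I(x, y) for all x, y ∈ I. (Schwarz Lemma for projective maps.) -/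
/-- The hyperbolic distance between `x` and `y` in the bounded interval `(a, b)`:
`dist_{(a,b)}(x,y) = |log( ((y−a)(b−x)) / ((x−a)(b−y)) )|`. -/
noncomputable def hypDist (a b x y : ℝ) : ℝ :=
  |Real.log (((y - a) * (b - x)) / ((x - a) * (b - y)))|

lemma core_aux (α β γ δ K : ℝ) (hK : 1 < K)
    (hnum : ∀ t, 0 < t → 0 < α * t + β) (hden : ∀ t, 0 < t → 0 < γ * t + δ)
    (hdiam : ∀ s t, 0 < s → 0 < t →
      (α * t + β) * (γ * s + δ) ≤ K * ((α * s + β) * (γ * t + δ))) :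
    ∀ s t, 0 < s → 0 < t →
      |Real.log ((α * t + β) / (γ * t + δ)) - Real.log ((α * s + β) / (γ * s + δ))| ≤
        (K - 1) / (K + 1) * |Real.log t - Real.log s| := by
  have lim : ∀ f : ℝ → ℝ, Continuous f → (∀ e, 0 < e → 0 ≤ f e) → 0 ≤ f 0 := by
    intro f hf h
    have h1 : Filter.Tendsto f (nhdsWithin 0 (Set.Ioi 0)) (nhds (f 0)) :=
      (hf.tendsto 0).mono_left nhdsWithin_le_nhds
    refine ge_of_tendsto h1 ?_
    filter_upwards [self_mem_nhdsWithin] with e he using h e he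
  have hβ : 0 ≤ β := by
    have := lim (fun e => α * e + β) (by fun_prop) (fun e he => (hnum e he).le)
    simpa using this
  have hδ : 0 ≤ δ := by
    have := lim (fun e => γ * e + δ) (by fun_prop) (fun e he => (hden e he).le)
    simpa using this
  have hα : 0 ≤ α := by
    have := lim (fun e => α + β * e) (by fun_prop) (fun e he => by
      have h := mul_pos (hnum (1 / e) (by positivity)) he
      have h2 : (α * (1 / e) + β) * e = α + β * e := by field_simp
      rw [h2] at h; exact h.le)
    simpa using this
  have hγ : 0 ≤ γ := by
    have := lim (fun e => γ + δ * e) (by fun_prop) (fun e he => by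
      have h := mul_pos (hden (1 / e) (by positivity)) he
      have h2 : (γ * (1 / e) + δ) * e = γ + δ * e := by field_simp
      rw [h2] at h; exact h.le)
    simpa using this
  have h1 : α * δ ≤ K * (β * γ) := by
    have := lim (fun e => K * ((α * e + β) * (γ + δ * e)) - (α + β * e) * (γ * e + δ))
      (by fun_prop) (fun e he => by
      have h := mul_le_mul_of_nonneg_right (hdiam e (1 / e) he (by positivity)) he.le
      have h2 : (α * (1 / e) + β) * (γ * e + δ) * e = (α + β * e) * (γ * e + δ) := by field_simp
      have h3 : K * ((α * e + β) * (γ * (1 / e) + δ)) * e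
        = K * ((α * e + β) * (γ + δ * e)) := by field_simp
      rw [h2, h3] at h
      exact sub_nonneg.2 h)
    simp at this
    linarith
  have h2 : β * γ ≤ K * (α * δ) := by
    have := lim (fun e => K * ((α + β * e) * (γ * e + δ)) - (α * e + β) * (γ + δ * e))
      (by fun_prop) (fun e he => by
      have h := mul_le_mul_of_nonneg_right (hdiam (1 / e) e (by positivity) he) he.le
      have h2 : (α * e + β) * (γ * (1 / e) + δ) * e = (α * e + β) * (γ + δ * e) := by field_simp
      have h3 : K * ((α * (1 / e) + β) * (γ * e + δ)) * e
        = K * ((α + β * e) * (γ * e + δ)) := by field_simp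
      rw [h2, h3] at h
      exact sub_nonneg.2 h)
    simp at this
    linarith
  intro s t hs ht
  have key := Convex.norm_image_sub_le_of_norm_hasDerivWithin_le (𝕜 := ℝ)
    (f := fun w => Real.log (α * Real.exp w + β) - Real.log (γ * Real.exp w + δ))
    (f' := fun w => α * Real.exp w / (α * Real.exp w + β)
      - γ * Real.exp w / (γ * Real.exp w + δ))
    (C := (K - 1) / (K + 1)) (s := Set.univ) (x := Real.log s) (y := Real.log t)
    (fun w _ => by
      have e1 := hnum _ (Real.exp_pos w)
      have e2 := hden _ (Real.exp_pos w)
      exact (((((Real.hasDerivAt_exp w).const_mul α).add_const β).log e1.ne').sub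
        ((((Real.hasDerivAt_exp w).const_mul γ).add_const δ).log e2.ne')).hasDerivWithinAt)
    (fun w _ => by
      have e0 := Real.exp_pos w
      have e1 := hnum _ e0
      have e2 := hden _ e0
      generalize Real.exp w = u at *
      have e3 : α * u / (α * u + β) - γ * u / (γ * u + δ)
        = (α * δ - β * γ) * u / ((α * u + β) * (γ * u + δ)) := by
        rw [div_sub_div _ _ e1.ne' e2.ne']
        congr 1
        ring
      rw [e3, Real.norm_eq_abs, abs_div, abs_mul, abs_of_pos e0, abs_of_pos (mul_pos e1 e2),
        div_le_div_iff₀ (mul_pos e1 e2) (by linarith)]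
      have e4 : |α * δ - β * γ| * (K + 1) ≤ (K - 1) * (α * δ + β * γ) := by
        rcases abs_cases (α * δ - β * γ) with h | h <;> rw [h.1] <;> nlinarith
      have e5 : 0 ≤ (K - 1) * (α * γ * u ^ 2 + β * δ) :=
        mul_nonneg (by linarith) (by positivity)
      have e6 := mul_le_mul_of_nonneg_right e4 e0.le
      nlinarith)
    convex_univ (Set.mem_univ _) (Set.mem_univ _)
  simp only [Real.exp_log hs, Real.exp_log ht, Real.norm_eq_abs] at key
  rwa [Real.log_div (hnum t ht).ne' (hden t ht).ne', Real.log_div (hnum s hs).ne' (hden s hs).ne']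

lemma hypDist_eq (a b x y : ℝ) (hx : x ∈ Set.Ioo a b) (hy : y ∈ Set.Ioo a b) :
    hypDist a b x y = |Real.log ((y - a) / (b - y)) - Real.log ((x - a) / (b - x))| := by
  have h1 := sub_pos.2 hx.1
  have h2 := sub_pos.2 hx.2
  have h3 := sub_pos.2 hy.1
  have h4 := sub_pos.2 hy.2
  unfold hypDist
  rw [← Real.log_div (by positivity) (by positivity)]
  congr 2
  field_simp

lemma schwarz_pos (D : ℝ) (hD : 0 < D) (a b c d p q r s : ℝ) (hab : a < b)
    (hpos : ∀ x ∈ Set.Ioo a b, 0 < r * x + s)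
    (hmap : ∀ x ∈ Set.Ioo a b, (p * x + q) / (r * x + s) ∈ Set.Ioo c d)
    (hdiam : ∀ x ∈ Set.Ioo a b, ∀ y ∈ Set.Ioo a b,
      hypDist c d ((p * x + q) / (r * x + s)) ((p * y + q) / (r * y + s)) ≤ D) :
    ∀ x ∈ Set.Ioo a b, ∀ y ∈ Set.Ioo a b,
      hypDist c d ((p * x + q) / (r * x + s)) ((p * y + q) / (r * y + s)) ≤
        (Real.exp D - 1) / (Real.exp D + 1) * hypDist a b x y := by
  obtain ⟨α, hα⟩ : ∃ α, α = p * b + q - c * (r * b + s) := ⟨_, rfl⟩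
  obtain ⟨β, hβ⟩ : ∃ β, β = p * a + q - c * (r * a + s) := ⟨_, rfl⟩
  obtain ⟨γ, hγ⟩ : ∃ γ, γ = d * (r * b + s) - (p * b + q) := ⟨_, rfl⟩
  obtain ⟨δ, hδ⟩ : ∃ δ, δ = d * (r * a + s) - (p * a + q) := ⟨_, rfl⟩
  have num : ∀ x ∈ Set.Ioo a b, α * ((x - a) / (b - x)) + β =
      (b - a) * (r * x + s) / (b - x) * ((p * x + q) / (r * x + s) - c) := by
    intro x hx
    have h1 := sub_pos.2 hx.2
    have h2 := hpos x hx
    rw [hα, hβ]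
    field_simp
    ring
  have den : ∀ x ∈ Set.Ioo a b, γ * ((x - a) / (b - x)) + δ =
      (b - a) * (r * x + s) / (b - x) * (d - (p * x + q) / (r * x + s)) := by
    intro x hx
    have h1 := sub_pos.2 hx.2
    have h2 := hpos x hx
    rw [hγ, hδ]
    field_simp
    ring
  have fac : ∀ x ∈ Set.Ioo a b, 0 < (b - a) * (r * x + s) / (b - x) := fun x hx =>
    div_pos (mul_pos (sub_pos.2 hab) (hpos x hx)) (sub_pos.2 hx.2)
  have npos : ∀ x ∈ Set.Ioo a b, 0 < α * ((x - a) / (b - x)) + β := fun x hx => by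
    rw [num x hx]; exact mul_pos (fac x hx) (sub_pos.2 (hmap x hx).1)
  have dpos : ∀ x ∈ Set.Ioo a b, 0 < γ * ((x - a) / (b - x)) + δ := fun x hx => by
    rw [den x hx]; exact mul_pos (fac x hx) (sub_pos.2 (hmap x hx).2)
  have quo : ∀ x ∈ Set.Ioo a b,
      ((p * x + q) / (r * x + s) - c) / (d - (p * x + q) / (r * x + s)) =
      (α * ((x - a) / (b - x)) + β) / (γ * ((x - a) / (b - x)) + δ) := fun x hx => by
    rw [num x hx, den x hx, mul_div_mul_left _ _ (fac x hx).ne']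
  have dist : ∀ x ∈ Set.Ioo a b, ∀ y ∈ Set.Ioo a b,
      hypDist c d ((p * x + q) / (r * x + s)) ((p * y + q) / (r * y + s)) =
      |Real.log ((α * ((y - a) / (b - y)) + β) / (γ * ((y - a) / (b - y)) + δ)) -
        Real.log ((α * ((x - a) / (b - x)) + β) / (γ * ((x - a) / (b - x)) + δ))| := by
    intro x hx y hy
    rw [hypDist_eq _ _ _ _ (hmap x hx) (hmap y hy), quo x hx, quo y hy]
  have surj : ∀ t : ℝ, 0 < t → ∃ x ∈ Set.Ioo a b, (x - a) / (b - x) = t := by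
    intro t ht
    have hba := sub_pos.2 hab
    have e1 : (a + b * t) / (1 + t) - a = (b - a) * t / (1 + t) := by field_simp; ring
    have e2 : b - (a + b * t) / (1 + t) = (b - a) / (1 + t) := by field_simp; ring
    refine ⟨(a + b * t) / (1 + t), ⟨sub_pos.1 ?_, sub_pos.1 ?_⟩, ?_⟩
    · rw [e1]; positivity
    · rw [e2]; positivity
    · rw [e1, e2]; field_simp
  have core := core_aux α β γ δ (Real.exp D) (Real.one_lt_exp_iff.2 hD)
    (fun t ht => by obtain ⟨x, hx, rfl⟩ := surj t ht; exact npos x hx)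
    (fun t ht => by obtain ⟨x, hx, rfl⟩ := surj t ht; exact dpos x hx)
    (fun u t hu ht => by
      obtain ⟨x, hx, rfl⟩ := surj u hu
      obtain ⟨y, hy, rfl⟩ := surj t ht
      have h := hdiam x hx y hy
      rw [dist x hx y hy] at h
      have n1 := npos x hx
      have n2 := npos y hy
      have d1 := dpos x hx
      have d2 := dpos y hy
      generalize α * ((x - a) / (b - x)) + β = A at *
      generalize α * ((y - a) / (b - y)) + β = B at *
      generalize γ * ((x - a) / (b - x)) + δ = A' at *
      generalize γ * ((y - a) / (b - y)) + δ = B' at *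
      have h := (le_abs_self _).trans h
      rw [← Real.log_div (by positivity) (by positivity),
        Real.log_le_iff_le_exp (by positivity), div_div_div_eq, div_le_iff₀ (by positivity)] at h
      linarith)
  intro x hx y hy
  rw [dist x hx y hy, hypDist_eq a b x y hx hy]
  exact core _ _ (div_pos (sub_pos.2 hx.1) (sub_pos.2 hx.2))
    (div_pos (sub_pos.2 hy.1) (sub_pos.2 hy.2))

/-- **Schwarz Lemma for projective maps.**  For every `D > 0` there is `λ ∈ (0,1)` such
that: whenever `I = (a,b)` and `J = (c,d)` are bounded nonempty open intervals, `φ` is a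
real Möbius transformation defined at every point of `I` and mapping `I` into `J`, and
the hyperbolic diameter of `φ(I)` in `J` is at most `D`, then
`dist_J(φ(x), φ(y)) ≤ λ · dist_I(x, y)` for all `x, y ∈ I`. -/
theorem schwarz_lemma_projective (D : ℝ) (hD : 0 < D) :
    ∃ l : ℝ, 0 < l ∧ l < 1 ∧
      ∀ a b c d p q r s : ℝ, a < b → c < d → p * s - q * r ≠ 0 →
        (∀ x ∈ Set.Ioo a b, r * x + s ≠ 0) →
        (∀ x ∈ Set.Ioo a b, (p * x + q) / (r * x + s) ∈ Set.Ioo c d) →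
        (∀ x ∈ Set.Ioo a b, ∀ y ∈ Set.Ioo a b,
          hypDist c d ((p * x + q) / (r * x + s)) ((p * y + q) / (r * y + s)) ≤ D) →
        ∀ x ∈ Set.Ioo a b, ∀ y ∈ Set.Ioo a b,
          hypDist c d ((p * x + q) / (r * x + s)) ((p * y + q) / (r * y + s)) ≤
            l * hypDist a b x y := by
  have hE := Real.one_lt_exp_iff.2 hD
  refine ⟨(Real.exp D - 1) / (Real.exp D + 1), div_pos (by linarith) (by linarith),
    (div_lt_one (by linarith)).2 (by linarith), ?_⟩
  intro a b c d p q r s hab _ _ hne hmap hdiam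
  have sign : (∀ x ∈ Set.Ioo a b, 0 < r * x + s) ∨ (∀ x ∈ Set.Ioo a b, r * x + s < 0) := by
    by_contra hcon
    push Not at hcon
    obtain ⟨⟨x, hx, hx'⟩, ⟨y, hy, hy'⟩⟩ := hcon
    have hc : ContinuousOn (fun z => r * z + s) (Set.Ioo a b) := by fun_prop
    obtain ⟨z, hz, hz'⟩ := isPreconnected_Ioo.intermediate_value hx hy hc ⟨hx', hy'⟩
    exact hne z hz hz'
  rcases sign with h | h
  · exact schwarz_pos D hD a b c d p q r s hab h hmap hdiam
  · have e : ∀ x, (p * x + q) / (r * x + s) = (-p * x + -q) / (-r * x + -s) := fun x => by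
      rw [← neg_div_neg_eq]
      congr 1 <;> ring
    simp only [e] at hmap hdiam ⊢
    exact schwarz_pos D hD a b c d (-p) (-q) (-r) (-s) hab
      (fun x hx => by have := h x hx; linarith) hmap hdiam
end

section
/- Let 0 < 𝚝 < 1, let n ≥ 1 be an integer, and let k ∈ {0,1,…,n−1}. Set φ_k = arccos( √(1−𝚝⁴) · cos(π(k+1/2)/n) ). Then for z = exp(iφ_k) and for z = exp(−iφ_k) one has trace(W(z)^n) = 0; that is, these 2n points on the unit circle are Lee–Yang zeros of the periodic one-dimensional Ising chain of length n. -/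
/-- The transfer matrix of the one-dimensional Ising model:
`W(z)` has rows `(1/(𝚝z), 𝚝)` and `(𝚝, z/𝚝)`. -/
noncomputable def transferMatrix (t : ℝ) (z : ℂ) : Matrix (Fin 2) (Fin 2) ℂ :=
  !![1 / ((t : ℂ) * z), (t : ℂ); (t : ℂ), z / (t : ℂ)]

theorem trace_pow_two_by_two (M : Matrix (Fin 2) (Fin 2) ℂ) (a b : ℂ)
    (h1 : M.trace = a + b) (h2 : M.det = a * b) (n : ℕ) :
    (M ^ n).trace = a ^ n + b ^ n := by
  have hM : M * M = (a + b) • M - (a * b) • (1 : Matrix (Fin 2) (Fin 2) ℂ) := by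
    rw [← h1, ← h2, Matrix.trace_fin_two, Matrix.det_fin_two]
    ext i j
    fin_cases i <;> fin_cases j <;> simp [Matrix.mul_apply, Fin.sum_univ_two] <;> ring
  induction n using Nat.twoStepInduction with
  | zero => simp; norm_num
  | one => simpa using h1
  | more n ih1 ih2 =>
    have : M ^ (n + 2) = (a + b) • M ^ (n + 1) - (a * b) • M ^ n := by
      rw [pow_add, pow_two, hM, mul_sub, Matrix.mul_smul, Matrix.mul_smul, mul_one, pow_succ]
    rw [this, Matrix.trace_sub, Matrix.trace_smul, Matrix.trace_smul, ih1, ih2,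
      smul_eq_mul, smul_eq_mul]
    ring

theorem trace_transferMatrix_pow_eq_zero (t : ℝ) (ht0 : 0 < t) (ht1 : t < 1)
    (n : ℕ) (hn : 1 ≤ n) (k : ℕ) (z : ℂ) (hz0 : z ≠ 0)
    (hz : z + z⁻¹ = 2 * ((Real.sqrt (1 - t ^ 4) *
      Real.cos (Real.pi * ((k : ℝ) + 1 / 2) / (n : ℝ)) : ℝ) : ℂ)) :
    Matrix.trace (transferMatrix t z ^ n) = 0 := by
  have ht : (t : ℂ) ≠ 0 := by exact_mod_cast ht0.ne'
  have hnn : (n : ℝ) ≠ 0 := by positivity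
  have hs : ((Real.sqrt (1 - t ^ 4) : ℝ) : ℂ) ^ 2 = 1 - (t : ℂ) ^ 4 := by
    have h4 : t ^ 4 ≤ 1 := pow_le_one₀ ht0.le ht1.le
    have := Real.sq_sqrt (show 0 ≤ 1 - t ^ 4 by linarith)
    exact_mod_cast this
  set s : ℂ := ((Real.sqrt (1 - t ^ 4) : ℝ) : ℂ) with hsdef
  set θ : ℝ := Real.pi * ((k : ℝ) + 1 / 2) / (n : ℝ) with hθ
  have hcos : 2 * Complex.cos θ =
      Complex.exp (θ * Complex.I) + Complex.exp (-θ * Complex.I) := Complex.two_cos _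
  have hprod : Complex.exp (θ * Complex.I) * Complex.exp (-θ * Complex.I) = 1 := by
    rw [← Complex.exp_add]; simp
  rw [trace_pow_two_by_two _ (s / t * Complex.exp (θ * Complex.I))
    (s / t * Complex.exp (-θ * Complex.I))]
  · rw [mul_pow, mul_pow, ← mul_add, ← Complex.exp_nat_mul, ← Complex.exp_nat_mul]
    have h0 : Real.cos (n * θ) = 0 := by
      rw [Real.cos_eq_zero_iff]
      refine ⟨k, ?_⟩
      rw [hθ]; push_cast; field_simp
    have h0c : Complex.cos ((n : ℂ) * θ) = 0 := by exact_mod_cast congrArg Complex.ofReal h0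
    have h2 := Complex.two_cos ((n : ℂ) * θ)
    rw [h0c, mul_zero] at h2
    rw [← mul_assoc, ← mul_assoc, mul_neg, ← h2, mul_zero]
  · rw [← mul_add, ← hcos, Matrix.trace_fin_two]
    have : transferMatrix t z 0 0 + transferMatrix t z 1 1 = (z + z⁻¹) / t := by
      simp [transferMatrix]; field_simp; ring
    rw [this, hz]
    push_cast
    rw [← hsdef]
    ring
  · have e : s / t * Complex.exp (θ * Complex.I) * (s / t * Complex.exp (-θ * Complex.I))
        = s ^ 2 / t ^ 2 * (Complex.exp (θ * Complex.I) * Complex.exp (-θ * Complex.I)) := by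
      ring
    rw [e, hprod, hs, Matrix.det_fin_two]
    simp [transferMatrix]
    field_simp

/-- **Lee–Yang zeros of the periodic 1D Ising chain.**  For `0 < 𝚝 < 1`, `n ≥ 1` and
`0 ≤ k < n`, set `φ_k = arccos(√(1−𝚝⁴)·cos(π(k+1/2)/n))`.  Then
`trace(W(e^{iφ_k})^n) = 0 = trace(W(e^{−iφ_k})^n)`: these `2n` points of the unit circle
are zeros of the partition function of the cyclic chain of length `n`. -/
theorem oneD_ising_leeYang_zeros (t : ℝ) (ht0 : 0 < t) (ht1 : t < 1)
    (n : ℕ) (hn : 1 ≤ n) (k : ℕ) (hk : k < n) (φ : ℝ)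
    (hφ : φ = Real.arccos (Real.sqrt (1 - t ^ 4) *
      Real.cos (Real.pi * ((k : ℝ) + 1 / 2) / (n : ℝ)))) :
    Matrix.trace (transferMatrix t (Complex.exp (Complex.I * (φ : ℂ))) ^ n) = 0 ∧
    Matrix.trace (transferMatrix t (Complex.exp (-Complex.I * (φ : ℂ))) ^ n) = 0 := by
  have h4 : t ^ 4 ≤ 1 := pow_le_one₀ ht0.le ht1.le
  have hs0 := Real.sqrt_nonneg (1 - t ^ 4)
  have hs1 : Real.sqrt (1 - t ^ 4) ≤ 1 := by
    rw [Real.sqrt_le_iff]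
    refine ⟨by norm_num, ?_⟩
    have : 0 < t ^ 4 := by positivity
    linarith
  have habs : |Real.sqrt (1 - t ^ 4) * Real.cos (Real.pi * ((k : ℝ) + 1 / 2) / (n : ℝ))| ≤ 1 := by
    rw [abs_mul, abs_of_nonneg hs0]
    exact mul_le_one₀ hs1 (abs_nonneg _) (Real.abs_cos_le_one _)
  have hc : Real.cos φ = Real.sqrt (1 - t ^ 4) *
      Real.cos (Real.pi * ((k : ℝ) + 1 / 2) / (n : ℝ)) := by
    rw [hφ, Real.cos_arccos (abs_le.mp habs).1 (abs_le.mp habs).2]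
  have h2 := Complex.two_cos (φ : ℂ)
  constructor
  · apply trace_transferMatrix_pow_eq_zero t ht0 ht1 n hn k _ (Complex.exp_ne_zero _)
    rw [← hc, Complex.ofReal_cos, h2, ← Complex.exp_neg, mul_comm Complex.I, neg_mul]
  · apply trace_transferMatrix_pow_eq_zero t ht0 ht1 n hn k _ (Complex.exp_ne_zero _)
    rw [← hc, Complex.ofReal_cos, h2, ← Complex.exp_neg, neg_mul, neg_mul, neg_neg,
      mul_comm Complex.I, add_comm]
end

section
/- The map g has exactly one fixed point t_c in the open interval (0,1); this fixed point is repelling, i.e., g'(t_c) > 1. Moreover, for every t ∈ (0, t_c) the iterates g^n(t) converge to 0 as n → ∞, and for every t ∈ (t_c, 1) the iterates g^n(t) converge to 1. -/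
/-- The restriction of the renormalization of the diamond hierarchical lattice to the
invariant line `z = 1`: `g(t) = (2t/(1+t²))²`. -/
noncomputable def gmap (t : ℝ) : ℝ := (2 * t / (1 + t ^ 2)) ^ 2

theorem gmap_sub (t : ℝ) :
    gmap t - t = t * (1 - t) * (t ^ 3 + t ^ 2 + 3 * t - 1) / (1 + t ^ 2) ^ 2 := by
  have h : (1 + t ^ 2) ≠ 0 := by positivity
  unfold gmap
  field_simp
  ring

theorem gmap_continuous : Continuous gmap := by
  unfold gmap
  refine Continuous.pow (Continuous.div (by fun_prop) (by fun_prop) ?_) 2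
  intro x
  positivity

theorem gmap_lt_one {t : ℝ} (h0 : 0 < t) (h1 : t < 1) : gmap t < 1 := by
  have h : 2 * t / (1 + t ^ 2) < 1 := by
    rw [div_lt_one (by positivity)]
    nlinarith [mul_pos (sub_pos.2 h1) (sub_pos.2 h1)]
  have h' : 0 < 2 * t / (1 + t ^ 2) := by positivity
  unfold gmap
  nlinarith

theorem gmap_hasDerivAt (t : ℝ) :
    HasDerivAt gmap (8 * t * (1 - t ^ 2) / (1 + t ^ 2) ^ 3) t := by
  have h : (1 + t ^ 2) ≠ 0 := by positivity
  have h1 : HasDerivAt (fun x : ℝ => 2 * x) (2 * 1) t := (hasDerivAt_id t).const_mul 2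
  have h2 : HasDerivAt (fun x : ℝ => 1 + x ^ 2) (2 * t) t := by
    simpa using (hasDerivAt_pow 2 t).const_add 1
  have h3 := (h1.div h2 h).pow 2
  refine h3.congr_deriv ?_
  simp only [Pi.div_apply, Nat.add_one_sub_one, pow_one, Nat.cast_ofNat, show 2 - 1 = 1 from rfl]
  field_simp
  ring

/-- **Dynamics on the invariant interval.**  The map `g` has exactly one fixed point
`t_c` in `(0,1)`; it is repelling, i.e. `g'(t_c) > 1`; the iterates of every
`t ∈ (0, t_c)` converge to `0`, and the iterates of every `t ∈ (t_c, 1)` converge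
to `1`. -/
theorem gmap_dynamics :
    ∃ tc : ℝ, tc ∈ Set.Ioo (0 : ℝ) 1 ∧ gmap tc = tc ∧
      (∀ t ∈ Set.Ioo (0 : ℝ) 1, gmap t = t → t = tc) ∧
      1 < deriv gmap tc ∧
      (∀ t ∈ Set.Ioo 0 tc,
        Filter.Tendsto (fun n => gmap^[n] t) Filter.atTop (nhds 0)) ∧
      (∀ t ∈ Set.Ioo tc 1,
        Filter.Tendsto (fun n => gmap^[n] t) Filter.atTop (nhds 1)) := by
  obtain ⟨tc, ⟨hc0, hc1⟩, hp⟩ : ∃ tc ∈ Set.Ioo (0 : ℝ) (1 / 2),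
      tc ^ 3 + tc ^ 2 + 3 * tc - 1 = 0 := by
    have := intermediate_value_Ioo (a := (0 : ℝ)) (b := 1 / 2) (by norm_num)
      (f := fun t => t ^ 3 + t ^ 2 + 3 * t - 1) (by fun_prop)
    exact this (by norm_num)
  have hfix : gmap tc = tc := by
    have := gmap_sub tc
    rw [hp] at this
    simp at this
    linarith
  have hlow : ∀ t, 0 < t → t < tc → gmap t < t := by
    intro t h0 h1
    have h := gmap_sub t
    have hn : t ^ 3 + t ^ 2 + 3 * t - 1 < 0 := by
      have := pow_lt_pow_left₀ h1 h0.le (n := 3) (by norm_num)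
      have := pow_lt_pow_left₀ h1 h0.le (n := 2) (by norm_num)
      linarith
    have : t * (1 - t) * (t ^ 3 + t ^ 2 + 3 * t - 1) / (1 + t ^ 2) ^ 2 < 0 :=
      div_neg_of_neg_of_pos
        (mul_neg_of_pos_of_neg (mul_pos h0 (by linarith)) hn) (by positivity)
    linarith
  have hhigh : ∀ t, tc < t → t < 1 → t < gmap t := by
    intro t h0 h1
    have h := gmap_sub t
    have ht : 0 < t := hc0.trans h0
    have hn : 0 < t ^ 3 + t ^ 2 + 3 * t - 1 := by
      have := pow_lt_pow_left₀ h0 hc0.le (n := 3) (by norm_num)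
      have := pow_lt_pow_left₀ h0 hc0.le (n := 2) (by norm_num)
      linarith
    have : 0 < t * (1 - t) * (t ^ 3 + t ^ 2 + 3 * t - 1) / (1 + t ^ 2) ^ 2 :=
      div_pos (mul_pos (mul_pos ht (by linarith)) hn) (by positivity)
    linarith
  have hlim : ∀ t l, Filter.Tendsto (fun n => gmap^[n] t) Filter.atTop (nhds l) →
      gmap l = l := fun t l h =>
    isFixedPt_of_tendsto_iterate h gmap_continuous.continuousAt
  refine ⟨tc, ⟨hc0, by linarith⟩, hfix, ?_, ?_, ?_, ?_⟩
  · rintro t ⟨h0, h1⟩ ht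
    rcases lt_trichotomy t tc with h | h | h
    · linarith [hlow t h0 h]
    · exact h
    · linarith [hhigh t h h1]
  · rw [(gmap_hasDerivAt tc).deriv, lt_div_iff₀ (by positivity)]
    have h4 : 4 * tc = (1 + tc ^ 2) ^ 2 := by linear_combination (1 - tc) * hp
    have : 8 * tc * (1 - tc ^ 2) - (1 + tc ^ 2) ^ 3
        = (1 + tc ^ 2) ^ 2 * (1 - 3 * tc ^ 2) := by
      linear_combination 2 * (1 - tc ^ 2) * h4
    have : 0 < (1 + tc ^ 2) ^ 2 * (1 - 3 * tc ^ 2) :=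
      mul_pos (by positivity) (by nlinarith)
    linarith
  · rintro t ⟨h0, h1⟩
    have hinv : ∀ n, 0 < gmap^[n] t ∧ gmap^[n] t < tc := by
      intro n
      induction n with
      | zero => exact ⟨h0, h1⟩
      | succ k ih =>
        rw [Function.iterate_succ_apply']
        have ih0 := ih.1
        exact ⟨by unfold gmap at ih0 ⊢; positivity, (hlow _ ih.1 ih.2).trans ih.2⟩
    have hanti : Antitone (fun n => gmap^[n] t) := antitone_nat_of_succ_le fun n => by
      rw [Function.iterate_succ_apply']
      exact (hlow _ (hinv n).1 (hinv n).2).le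
    have hb : BddBelow (Set.range fun n => gmap^[n] t) :=
      ⟨0, by rintro _ ⟨n, rfl⟩; exact (hinv n).1.le⟩
    have hT := tendsto_atTop_ciInf hanti hb
    generalize (⨅ n, gmap^[n] t) = l at hT
    have hl0 : 0 ≤ l := ge_of_tendsto' hT fun n => (hinv n).1.le
    have hl1 : l ≤ t := hanti.le_of_tendsto hT 0
    have hf := hlim t l hT
    rcases hl0.eq_or_lt with h | h
    · rwa [← h] at hT
    · linarith [hlow l h (by linarith)]
  · rintro t ⟨h0, h1⟩
    have hinv : ∀ n, tc < gmap^[n] t ∧ gmap^[n] t < 1 := by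
      intro n
      induction n with
      | zero => exact ⟨h0, h1⟩
      | succ k ih =>
        rw [Function.iterate_succ_apply']
        exact ⟨ih.1.trans (hhigh _ ih.1 ih.2), gmap_lt_one (hc0.trans ih.1) ih.2⟩
    have hmono : Monotone (fun n => gmap^[n] t) := monotone_nat_of_le_succ fun n => by
      rw [Function.iterate_succ_apply']
      exact (hhigh _ (hinv n).1 (hinv n).2).le
    have hb : BddAbove (Set.range fun n => gmap^[n] t) :=
      ⟨1, by rintro _ ⟨n, rfl⟩; exact (hinv n).2.le⟩
    have hT := tendsto_atTop_ciSup hmono hb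
    generalize (⨆ n, gmap^[n] t) = l at hT
    have hl0 : l ≤ 1 := le_of_tendsto' hT fun n => (hinv n).2.le
    have hl1 : t ≤ l := hmono.ge_of_tendsto hT 0
    have hf := hlim t l hT
    rcases hl0.eq_or_lt with h | h
    · rwa [h] at hT
    · linarith [hhigh l (by linarith) h]
end

section
/- For all φ ∈ ℝ and all t ∈ (0,1): 3 − t⁴ + 2t²·cos(2φ) − 4·t·√(1−t²)·|sin(2φ)| > 0; equivalently, 4·(1 + t²·cos 2φ ∓ t·√(1−t²)·sin 2φ) > 1 + 2t²·cos 2φ + t⁴ for both choices of sign. Hence the differential of R does not contract the angular component of any tangent vector lying in the algebraic horizontal cone at any interior point of the cylinder. -/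
/-- Key inequality: Cauchy-Schwarz bounds the oscillating part, and
`(3 - u^2)^2 - (16 u - 12 u^2) = (u - 1)^2 (u^2 + 2 u + 9)` with `u = t^2`. -/
lemma cone_aux (t r c s : ℝ) (h0 : 0 < t) (h1 : t < 1) (hr : r ^ 2 = 1 - t ^ 2)
    (hcs : s ^ 2 + c ^ 2 = 1) :
    0 < 3 - t ^ 4 + 2 * t ^ 2 * c - 4 * t * r * s := by
  have hu : t ^ 2 < 1 := by nlinarith
  have hu4 : t ^ 4 < 1 := by nlinarith [sq_nonneg t]
  have hpos : 0 < (t ^ 2 - 1) ^ 2 * (t ^ 4 + 2 * t ^ 2 + 9) := by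
    have : t ^ 2 - 1 ≠ 0 := by linarith
    positivity
  have hsq : (2 * t ^ 2 * c - 4 * t * r * s) ^ 2 < (3 - t ^ 4) ^ 2 := by
    have e : (2 * t ^ 2 * c - 4 * t * r * s) ^ 2 + (2 * t ^ 2 * s + 4 * t * r * c) ^ 2
        = 4 * t ^ 4 + 16 * t ^ 2 * (1 - t ^ 2) := by
      rw [← hr]
      linear_combination (4 * t ^ 4 + 16 * t ^ 2 * r ^ 2) * hcs
    nlinarith [sq_nonneg (2 * t ^ 2 * s + 4 * t * r * c)]
  have := (abs_lt_of_sq_lt_sq' hsq (by linarith)).1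
  linarith

/-- **Non-contraction on the algebraic horizontal cone.**  For all `φ ∈ ℝ` and
`t ∈ (0,1)`:  `3 − t⁴ + 2t²·cos 2φ − 4t·√(1−t²)·|sin 2φ| > 0`; equivalently
`4(1 + t²·cos 2φ ∓ t·√(1−t²)·sin 2φ) > 1 + 2t²·cos 2φ + t⁴` for both choices of sign.
Hence the differential of `R` does not contract the angular component of any tangent
vector in the algebraic horizontal cone at any interior point of the cylinder. -/
theorem horizontal_cone_noncontraction (φ t : ℝ) (ht : t ∈ Set.Ioo (0 : ℝ) 1) :
    0 < 3 - t ^ 4 + 2 * t ^ 2 * Real.cos (2 * φ) -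
        4 * t * Real.sqrt (1 - t ^ 2) * |Real.sin (2 * φ)| ∧
    1 + 2 * t ^ 2 * Real.cos (2 * φ) + t ^ 4 <
      4 * (1 + t ^ 2 * Real.cos (2 * φ) - t * Real.sqrt (1 - t ^ 2) * Real.sin (2 * φ)) ∧
    1 + 2 * t ^ 2 * Real.cos (2 * φ) + t ^ 4 <
      4 * (1 + t ^ 2 * Real.cos (2 * φ) + t * Real.sqrt (1 - t ^ 2) * Real.sin (2 * φ)) := by
  obtain ⟨h0, h1⟩ := ht
  have hr : Real.sqrt (1 - t ^ 2) ^ 2 = 1 - t ^ 2 := Real.sq_sqrt (by nlinarith)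
  have hcs := Real.sin_sq_add_cos_sq (2 * φ)
  have a := cone_aux t _ _ _ h0 h1 hr hcs
  have b := cone_aux t _ (Real.cos (2 * φ)) (-Real.sin (2 * φ)) h0 h1 hr (by rw [neg_sq, hcs])
  have d := cone_aux t _ (Real.cos (2 * φ)) |Real.sin (2 * φ)| h0 h1 hr (by rw [sq_abs, hcs])
  exact ⟨d, by linarith, by linarith⟩
end

section
/- Let r ≥ 1 be an integer and let λ > 1 and a ≠ 0 be real numbers. There exist no ε > 0 and function g : ℝ → ℝ that is of class C^{r+1} on (−ε, ε) and satisfies g(λ·v) − λ^r·g(v) = a·v^r for all v with |v| < ε/λ. Consequently, any invariant central manifold u = g(v) of the resonant Poincaré–Dulac normal form (u,v) ↦ (λ^r·u + a·v^r, λ·v) is of class at most C^r at the fixed point. -/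
theorem iteratedDeriv_scale_aux (f : ℝ → ℝ) (c : ℝ) (n : ℕ) :
    iteratedDeriv n (fun x => f (c * x)) = fun x => c ^ n * iteratedDeriv n f (c * x) := by
  induction n with
  | zero => simp
  | succ n ih =>
    funext x
    rw [iteratedDeriv_succ, ih, deriv_const_mul_field, iteratedDeriv_succ,
      deriv_comp_mul_left c (iteratedDeriv n f) x, smul_eq_mul, pow_succ]
    ring

/-- **Finite smoothness of resonant central manifolds.**  Let `r ≥ 1`, `λ > 1` and
`a ≠ 0`.  There exist no `ε > 0` and function `g : ℝ → ℝ` of class `C^{r+1}` on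
`(−ε, ε)` satisfying `g(λ·v) − λ^r·g(v) = a·v^r` for all `|v| < ε/λ`.  Consequently any
invariant central manifold `u = g(v)` of the Poincaré–Dulac normal form
`(u,v) ↦ (λ^r·u + a·v^r, λ·v)` is of class at most `C^r` at the fixed point. -/
theorem no_Cr_plus_one_central_manifold (r : ℕ) (hr : 1 ≤ r) (l a : ℝ)
    (hl : 1 < l) (ha : a ≠ 0) :
    ¬∃ (ε : ℝ) (g : ℝ → ℝ), 0 < ε ∧
      ContDiffOn ℝ (r + 1 : ℕ) g (Set.Ioo (-ε) ε) ∧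
      ∀ v : ℝ, |v| < ε / l → g (l * v) - l ^ r * g v = a * v ^ r := by
  rintro ⟨ε, g, hε, hg, h⟩
  have hl0 : 0 < l := by linarith
  have hga : ContDiffAt ℝ r g 0 :=
    (hg.contDiffAt (Ioo_mem_nhds (by linarith) hε)).of_le (by exact_mod_cast Nat.le_succ r)
  have hev : (fun v => g (l * v)) =ᶠ[nhds 0]
      ((fun v => l ^ r * g v) + (fun v => a * v ^ r)) := by
    have hpos : 0 < ε / l := div_pos hε hl0
    filter_upwards [Metric.ball_mem_nhds (0 : ℝ) hpos] with v hv
    have h1 := h v (by simpa using hv)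
    simp only [Pi.add_apply]
    linarith
  have hA : ContDiffAt ℝ r (fun v => l ^ r * g v) 0 := contDiffAt_const.mul hga
  have hB : ContDiffAt ℝ r (fun v : ℝ => a * v ^ r) 0 :=
    contDiffAt_const.mul (contDiffAt_id.pow r)
  have h2 := (hev.iteratedDeriv r).self_of_nhds
  rw [iteratedDeriv_scale_aux, iteratedDeriv_add hA hB, iteratedDeriv_const_mul_field,
    iteratedDeriv_const_mul_field] at h2
  simp only [mul_zero] at h2
  have h3 : a * iteratedDeriv r (fun v : ℝ => v ^ r) 0 = 0 := by linarith
  rw [iteratedDeriv_eq_iterate, iter_deriv_pow, Nat.sub_self, pow_zero, mul_one] at h3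
  refine (mul_ne_zero ha (Finset.prod_ne_zero_iff.mpr fun i hi => ?_)) h3
  have : (i : ℝ) < r := by exact_mod_cast Finset.mem_range.mp hi
  exact (sub_pos.mpr this).ne'
end

section
/- In the polynomial ring ℂ[U,V,W], the determinant of the 3×3 Jacobian matrix of partial derivatives of the map R̂(U,V,W) = ((U²+V²)², V²(U+W)², (V²+W²)²) equals 32·V·(U·W − V²)·(U+W)²·(U²+V²)·(W²+V²). In particular, the critical locus of R̂ is the union of the plane V = 0, the quadric cone UW = V², and the planes U + W = 0, U = ±iV, and W = ±iV. -/
open MvPolynomial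

/-- **The Jacobian of the Migdal–Kadanoff renormalization.**  In `ℂ[U,V,W]` the
determinant of the Jacobian matrix of `R̂` equals
`32·V·(UW − V²)·(U+W)²·(U²+V²)·(W²+V²)`; in particular the critical locus of `R̂` is the
union of the plane `V = 0`, the quadric cone `UW = V²`, and the planes `U+W = 0`,
`U = ±iV`, `W = ±iV`. -/
theorem MK_jacobian_det :
    (Matrix.of fun i j : Fin 3 => pderiv j (MKcomp i)).det =
      32 * X 1 * (X 0 * X 2 - X 1 ^ 2) * (X 0 + X 2) ^ 2 *
        (X 0 ^ 2 + X 1 ^ 2) * (X 2 ^ 2 + X 1 ^ 2) := by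
  rw [Matrix.det_fin_three]
  simp [MKcomp, pderiv_X, Derivation.leibniz_pow, Derivation.leibniz, Pi.single_apply]
  ring
end

section
/- Fix ω ∈ (−π/2, π/2), and for ρ > 0 set φ_ρ = π + ρ·sin ω, z_ρ = exp(iφ_ρ), and t_ρ = 1 − ρ·cos ω. Then as ρ → 0⁺ one has (z_ρ + t_ρ)/(z_ρ⁻¹ + t_ρ) → exp(2iω) and (cos φ_ρ + 1)/(cos φ_ρ + (t_ρ + t_ρ⁻¹)/2) → sin²ω. Thus the indeterminacy point α = (π, 1) blows up under f to the curve Γ(ω) = (2ω, sin²ω) across the cylinder. -/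
/-- **Blow-up of the indeterminacy point.**  Fix `ω ∈ (−π/2, π/2)` and, for `ρ > 0`, set
`φ_ρ = π + ρ·sin ω`, `z_ρ = e^{iφ_ρ}`, `t_ρ = 1 − ρ·cos ω`.  Then, as `ρ → 0⁺`,
`(z_ρ + t_ρ)/(z_ρ⁻¹ + t_ρ) → e^{2iω}` and
`(cos φ_ρ + 1)/(cos φ_ρ + (t_ρ + t_ρ⁻¹)/2) → sin²ω`: the indeterminacy point
`α = (π, 1)` blows up under `f` to the curve `Γ(ω) = (2ω, sin²ω)` across the cylinder. -/
theorem blowup_of_indeterminacy_point (ω : ℝ)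
    (hω : ω ∈ Set.Ioo (-(Real.pi / 2)) (Real.pi / 2)) :
    Filter.Tendsto (fun ρ : ℝ =>
        (Complex.exp (Complex.I * ((Real.pi + ρ * Real.sin ω : ℝ) : ℂ)) +
            ((1 - ρ * Real.cos ω : ℝ) : ℂ)) /
          ((Complex.exp (Complex.I * ((Real.pi + ρ * Real.sin ω : ℝ) : ℂ)))⁻¹ +
            ((1 - ρ * Real.cos ω : ℝ) : ℂ)))
      (nhdsWithin 0 (Set.Ioi 0))
      (nhds (Complex.exp (2 * Complex.I * (ω : ℂ)))) ∧
    Filter.Tendsto (fun ρ : ℝ =>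
        (Real.cos (Real.pi + ρ * Real.sin ω) + 1) /
          (Real.cos (Real.pi + ρ * Real.sin ω) +
            ((1 - ρ * Real.cos ω) + (1 - ρ * Real.cos ω)⁻¹) / 2))
      (nhdsWithin 0 (Set.Ioi 0))
      (nhds (Real.sin ω ^ 2)) := by
  have hc : 0 < Real.cos ω := Real.cos_pos_of_mem_Ioo hω
  have hsc := Real.sin_sq_add_cos_sq ω
  have hle : nhdsWithin (0:ℝ) (Set.Ioi 0) ≤ nhdsWithin 0 ({0}ᶜ) :=
    nhdsWithin_mono _ (fun x hx => ne_of_gt hx)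
  constructor
  · have hlin : HasDerivAt (fun ρ : ℝ => Complex.I * ((Real.pi + ρ * Real.sin ω : ℝ) : ℂ))
        (Complex.I * ((Real.sin ω : ℝ) : ℂ)) 0 := by
      have h : HasDerivAt (fun ρ : ℝ => Real.pi + ρ * Real.sin ω) (Real.sin ω) 0 := by
        simpa using ((hasDerivAt_id (0:ℝ)).mul_const (Real.sin ω)).const_add Real.pi
      exact h.ofReal_comp.const_mul Complex.I
    have ht : HasDerivAt (fun ρ : ℝ => ((1 - ρ * Real.cos ω : ℝ) : ℂ))
        (((-Real.cos ω : ℝ)) : ℂ) 0 := by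
      have h : HasDerivAt (fun ρ : ℝ => 1 - ρ * Real.cos ω) (-Real.cos ω) 0 := by
        simpa using ((hasDerivAt_id (0:ℝ)).mul_const (Real.cos ω)).const_sub 1
      exact h.ofReal_comp
    have e1 : Complex.exp (Complex.I * (Real.pi : ℂ)) = -1 := by
      rw [mul_comm]; exact Complex.exp_pi_mul_I
    have e2 : Complex.exp (-(Complex.I * (Real.pi : ℂ))) = -1 := by
      rw [Complex.exp_neg, e1]; norm_num
    have hN := (hlin.cexp.add ht).tendsto_slope.mono_left hle
    have hD := (hlin.neg.cexp.add ht).tendsto_slope.mono_left hle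
    have hexp : Complex.exp (-(Complex.I * (ω:ℂ))) = Real.cos ω - Complex.I * Real.sin ω := by
      have : -(Complex.I * (ω:ℂ)) = ((-ω : ℝ) : ℂ) * Complex.I := by push_cast; ring
      rw [this, Complex.exp_mul_I]
      push_cast
      rw [Complex.cos_neg, Complex.sin_neg]; ring
    have hexp' : Complex.exp (Complex.I * (ω:ℂ)) = Real.cos ω + Complex.I * Real.sin ω := by
      rw [mul_comm, Complex.exp_mul_I]
      push_cast
      ring
    have hNv : Complex.exp (Complex.I * ((Real.pi + 0 * Real.sin ω : ℝ) : ℂ)) *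
        (Complex.I * ((Real.sin ω : ℝ) : ℂ)) + ((-Real.cos ω : ℝ) : ℂ)
        = -Complex.exp (Complex.I * (ω:ℂ)) := by
      rw [hexp', zero_mul, add_zero, e1, Complex.ofReal_neg]; ring
    have hDv : Complex.exp (-(Complex.I * ((Real.pi + 0 * Real.sin ω : ℝ) : ℂ))) *
        (-(Complex.I * ((Real.sin ω : ℝ) : ℂ))) + ((-Real.cos ω : ℝ) : ℂ)
        = -Complex.exp (-(Complex.I * (ω:ℂ))) := by
      rw [hexp, zero_mul, add_zero, e2, Complex.ofReal_neg]; ring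
    have hlim := hN.div hD (by
      simp only [Pi.neg_apply]
      rw [hDv]; exact neg_ne_zero.mpr (Complex.exp_ne_zero _))
    simp only [Pi.neg_apply] at hlim
    rw [hNv, hDv, neg_div_neg_eq, ← Complex.exp_sub] at hlim
    have e3 : Complex.I * (ω:ℂ) - -(Complex.I * (ω:ℂ)) = 2 * Complex.I * ω := by ring
    rw [e3] at hlim
    refine hlim.congr' ?_
    filter_upwards [self_mem_nhdsWithin] with ρ hρ
    have hρ0 : ((ρ:ℝ):ℂ) ≠ 0 := by exact_mod_cast (ne_of_gt hρ)
    simp only [Pi.div_apply, slope, vsub_eq_sub, Pi.add_apply, Pi.neg_apply, sub_zero, zero_mul,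
      add_zero, e1, e2, Complex.ofReal_one, neg_add_cancel, Complex.real_smul, Complex.ofReal_inv]
    rw [mul_div_mul_left _ _ (inv_ne_zero hρ0), Complex.exp_neg]
  · have hS : Filter.Tendsto (fun ρ : ℝ => Real.sin (ρ * (Real.sin ω / 2)) / ρ)
        (nhdsWithin 0 (Set.Ioi 0)) (nhds (Real.sin ω / 2)) := by
      have h : HasDerivAt (fun ρ : ℝ => Real.sin (ρ * (Real.sin ω / 2))) (Real.sin ω / 2) 0 := by
        simpa using ((hasDerivAt_id (0:ℝ)).mul_const (Real.sin ω / 2)).sin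
      refine (h.tendsto_slope.mono_left hle).congr (fun ρ => ?_)
      simp [slope, div_eq_inv_mul]
    have hT : Filter.Tendsto (fun ρ : ℝ => 1 - ρ * Real.cos ω)
        (nhdsWithin 0 (Set.Ioi 0)) (nhds 1) := by
      have h : Continuous (fun ρ : ℝ => 1 - ρ * Real.cos ω) := by fun_prop
      simpa using (h.tendsto 0).mono_left nhdsWithin_le_nhds
    have hnum := (hS.pow 2).const_mul 2
    have hden := hnum.add ((hT.inv₀ one_ne_zero).const_mul (Real.cos ω ^ 2 / 2))
    have hv : 2 * (Real.sin ω / 2) ^ 2 + Real.cos ω ^ 2 / 2 * (1:ℝ)⁻¹ = 1 / 2 := by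
      rw [inv_one]; linarith
    have hlim := hnum.div hden (by rw [hv]; norm_num)
    rw [hv] at hlim
    have hv2 : 2 * (Real.sin ω / 2) ^ 2 / (1 / 2) = Real.sin ω ^ 2 := by ring
    rw [hv2] at hlim
    refine hlim.congr' ?_
    filter_upwards [self_mem_nhdsWithin, hT.eventually_ne one_ne_zero] with ρ hρ ht
    have hρ0 : ρ ≠ 0 := ne_of_gt hρ
    have hcos : Real.cos (Real.pi + ρ * Real.sin ω)
        = 2 * Real.sin (ρ * (Real.sin ω / 2)) ^ 2 - 1 := by
      rw [add_comm, Real.cos_add_pi]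
      have h2 : ρ * Real.sin ω = 2 * (ρ * (Real.sin ω / 2)) := by ring
      rw [h2, Real.cos_two_mul, Real.cos_sq']; ring
    rw [hcos]
    simp only [Pi.div_apply]
    generalize Real.sin (ρ * (Real.sin ω / 2)) = S
    have hd : 2 * S ^ 2 - 1 + ((1 - ρ * Real.cos ω) + (1 - ρ * Real.cos ω)⁻¹) / 2
        = ρ ^ 2 * (2 * (S / ρ) ^ 2 + Real.cos ω ^ 2 / 2 * (1 - ρ * Real.cos ω)⁻¹) := by
      field_simp
      ring
    have hn : 2 * S ^ 2 - 1 + 1 = ρ ^ 2 * (2 * (S / ρ) ^ 2) := by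
      field_simp
      ring
    rw [hd, hn, mul_div_mul_left _ _ (pow_ne_zero 2 hρ0)]
end
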